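/- Let F be a field, let R, M ≥ 1 be integers, and let K = R·M. Let α_0, …, α_{K−1}, β_0, …, β_{R−1} be K+R pairwise distinct elements of F, and let u_0, …, u_{K−1}, v_0, …, v_{R−1} be nonzero elements of F. Define V_α ∈ F^{K×K} by (V_α)_{i,k} = α_k^i, V_β ∈ F^{K×R} by (V_β)_{i,r} = β_r^i, P = diag(u_0, …, u_{K−1}), Q = diag(v_0, …, v_{R−1}), and A = (V_α·P)^{−1}·V_β·Q ∈ F^{K×R}. Fix m ∈ {0, …, M−1} and set S_m = {mR, …, (m+1)R−1}. Let W_m ∈ F^{R×R} be the Vandermonde matrix (W_m)_{i,s} = α_{mR+s}^i for i, s ∈ {0, …, R−1}, let U ∈ F^{R×R} be the Vandermonde matrix (U)_{i,r} = β_r^i for i, r ∈ {0, …, R−1}, let Φ_m = diag(φ_{m,0}, …, φ_{m,R−1}) with φ_{m,s} = u_{mR+s} · ∏_{j ∈ {0,…,K−1}∖S_m} (α_{mR+s} − α_j), and let Ψ_m = diag(ψ_0, …, ψ_{R−1}) with ψ_r = v_r · ∏_{j ∈ {0,…,K−1}∖S_m} (β_r − α_j). Then the m-th row block A_m ∈ F^{R×R}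 of A, defined by (A_m)_{s,r} = A_{mR+s, r}, satisfies A_m = (W_m·Φ_m)^{−1}·U·Ψ_m. -/

import Mathlib

open Matrix in
/-- A column-scaled Vandermonde matrix on distinct points with nonzero weights is invertible. -/
lemma isUnit_det_transpose_vandermonde_mul_diagonal {F : Type*} [Field F] {n : ℕ}
    {a w : Fin n → F} (ha : Function.Injective a) (hw : ∀ k, w k ≠ 0) :
    IsUnit ((vandermonde a)ᵀ * diagonal w).det := by
  rw [det_mul, det_transpose, det_diagonal, isUnit_iff_ne_zero]
  exact mul_ne_zero (det_vandermonde_ne_zero_iff.mpr ha)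
    (Finset.prod_ne_zero_iff.mpr fun k _ => hw k)

open Polynomial in
/-- If two weighted sums of powers agree for all exponents below `n`, then they agree for all
polynomials of degree less than `n`. -/
lemma sum_eval_mul_eq_of_sum_pow_mul_eq {F ι : Type*} [Field F] [Fintype ι] {n : ℕ}
    {a c : ι → F} {b d : F}
    (h : ∀ i : Fin n, ∑ k, a k ^ (i : ℕ) * c k = b ^ (i : ℕ) * d)
    {p : F[X]} (hp : p.natDegree < n) :
    ∑ k, p.eval (a k) * c k = p.eval b * d := by
  simp only [eval_eq_sum_range' hp, Finset.sum_mul]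
  rw [Finset.sum_comm]
  refine Finset.sum_congr rfl fun i hi => ?_
  simp only [mul_assoc, ← Finset.mul_sum]
  rw [h ⟨i, Finset.mem_range.mp hi⟩]

/-- Decomposition of the `m`-th `R × R` row block of the non-systematic
part `A = (V_α · P)⁻¹ · V_β · Q` of a systematic generalized Reed–Solomon generator matrix
(with `K = R·M`) as `A_m = (W_m · Φ_m)⁻¹ · U · Ψ_m`. -/
theorem row_block_of_systematic_GRS_is_cauchy_like
    (F : Type*) [Field F] (R M : ℕ) (hR : 1 ≤ R) (hM : 1 ≤ M)
    (α : Fin (R * M) → F) (β : Fin R → F)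
    (hdist : Function.Injective (Sum.elim α β))
    (u : Fin (R * M) → F) (v : Fin R → F)
    (hu : ∀ k, u k ≠ 0) (hv : ∀ r, v r ≠ 0)
    (Vα : Matrix (Fin (R * M)) (Fin (R * M)) F)
    (hVα : ∀ i k, Vα i k = α k ^ (i : ℕ))
    (Vβ : Matrix (Fin (R * M)) (Fin R) F)
    (hVβ : ∀ i r, Vβ i r = β r ^ (i : ℕ))
    (A : Matrix (Fin (R * M)) (Fin R) F)
    (hA : A = (Vα * Matrix.diagonal u)⁻¹ * Vβ * Matrix.diagonal v)
    (m : Fin M)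
    (idx : Fin R → Fin (R * M))
    (hidx : ∀ s : Fin R, (idx s : ℕ) = (m : ℕ) * R + (s : ℕ))
    (W : Matrix (Fin R) (Fin R) F)
    (hW : ∀ i s, W i s = α (idx s) ^ (i : ℕ))
    (U : Matrix (Fin R) (Fin R) F)
    (hU : ∀ i r, U i r = β r ^ (i : ℕ))
    (φ : Fin R → F)
    (hφ : ∀ s, φ s = u (idx s) *
      ∏ j ∈ Finset.univ.filter
          (fun j : Fin (R * M) => (j : ℕ) < (m : ℕ) * R ∨ (m : ℕ) * R + R ≤ (j : ℕ)),
        (α (idx s) - α j))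
    (ψ : Fin R → F)
    (hψ : ∀ r, ψ r = v r *
      ∏ j ∈ Finset.univ.filter
          (fun j : Fin (R * M) => (j : ℕ) < (m : ℕ) * R ∨ (m : ℕ) * R + R ≤ (j : ℕ)),
        (β r - α j))
    (Am : Matrix (Fin R) (Fin R) F)
    (hAm : ∀ s r, Am s r = A (idx s) r) :
    Am = (W * Matrix.diagonal φ)⁻¹ * U * Matrix.diagonal ψ := by
  have hα : Function.Injective α := fun x y h => Sum.inl_injective (hdist h)
  have hidx_inj : Function.Injective idx := fun s t h => by
    have := congrArg Fin.val h
    rw [hidx, hidx] at this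
    exact Fin.ext (by omega)
  obtain rfl : Vα = (Matrix.vandermonde α).transpose := by ext i k; exact hVα i k
  obtain rfl : W = (Matrix.vandermonde (α ∘ idx)).transpose := by ext i s; exact hW i s
  set T := Finset.univ.filter
    (fun j : Fin (R * M) => (j : ℕ) < (m : ℕ) * R ∨ (m : ℕ) * R + R ≤ (j : ℕ)) with hT
  have hTcompl : T = (Finset.univ.map ⟨idx, hidx_inj⟩)ᶜ := by
    ext j
    simp only [hT, Finset.mem_filter, Finset.mem_univ, true_and, Finset.mem_compl,
      Finset.mem_map, Function.Embedding.coeFn_mk, not_exists]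
    constructor
    · intro hj s hs
      have := hidx s
      rw [hs] at this
      omega
    · intro hj
      by_contra! hlt
      exact hj ⟨j - m * R, by omega⟩ (Fin.ext (by rw [hidx]; dsimp only; omega))
  have hcard : T.card + R = R * M := by
    have := Finset.card_compl_add_card (Finset.univ.map ⟨idx, hidx_inj⟩)
    rwa [← hTcompl, Finset.card_map, Finset.card_univ, Fintype.card_fin, Fintype.card_fin] at this
  have hφ0 : ∀ s, φ s ≠ 0 := fun s => by
    rw [hφ]
    refine mul_ne_zero (hu _) (Finset.prod_ne_zero_iff.mpr fun j hj => sub_ne_zero.mpr ?_)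
    rintro h
    rw [hTcompl, ← hα h] at hj
    simp at hj
  have hVA : (Matrix.vandermonde α).transpose * Matrix.diagonal u * A = Vβ * Matrix.diagonal v := by
    rw [hA, Matrix.mul_assoc _⁻¹, Matrix.mul_nonsing_inv_cancel_left _ _
      (isUnit_det_transpose_vandermonde_mul_diagonal hα hu)]
  have hWA : (Matrix.vandermonde (α ∘ idx)).transpose * Matrix.diagonal φ * Am
      = U * Matrix.diagonal ψ := by
    ext i r
    have hmoment : ∀ i : Fin (R * M),
        ∑ k, α k ^ (i : ℕ) * (u k * A k r) = β r ^ (i : ℕ) * v r := fun i => by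
      have := congrFun (congrFun hVA i) r
      rw [Matrix.mul_diagonal, hVβ, Matrix.mul_apply] at this
      simpa [Matrix.mul_diagonal, Matrix.vandermonde_apply, mul_assoc] using this
    have hdeg : (Polynomial.X ^ (i : ℕ) *
        ∏ j ∈ T, (Polynomial.X - Polynomial.C (α j))).natDegree < R * M := by
      refine Polynomial.natDegree_mul_le.trans_lt ?_
      rw [Polynomial.natDegree_X_pow, Polynomial.natDegree_finsetProd_X_sub_C_eq_card]
      omega
    have hsum := sum_eval_mul_eq_of_sum_pow_mul_eq hmoment hdeg
    simp only [Polynomial.eval_mul, Polynomial.eval_pow, Polynomial.eval_X,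
      Polynomial.eval_prod, Polynomial.eval_sub, Polynomial.eval_C] at hsum
    rw [Matrix.mul_diagonal, hU, hψ, Matrix.mul_apply]
    trans ∑ k, α k ^ (i : ℕ) * (∏ j ∈ T, (α k - α j)) * (u k * A k r)
    · rw [← Finset.sum_subset (Finset.subset_univ (Finset.univ.map ⟨idx, hidx_inj⟩)),
        Finset.sum_map]
      · refine Finset.sum_congr rfl fun s _ => ?_
        rw [Matrix.mul_diagonal, Matrix.transpose_apply, Matrix.vandermonde_apply, hφ, hAm]
        simp only [Function.comp_apply, Function.Embedding.coeFn_mk]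
        ring
      · intro k _ hk
        rw [Finset.prod_eq_zero (i := k) (by rwa [hTcompl, Finset.mem_compl]) (sub_self _),
          mul_zero, zero_mul]
    · rw [hsum]
      ring
  rw [Matrix.mul_assoc, ← hWA, Matrix.nonsing_inv_mul_cancel_left _ _
    (isUnit_det_transpose_vandermonde_mul_diagonal (hα.comp hidx_inj) hφ0)]
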